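/- Let A', A, B', B be finite nonempty types, ρ : Matrix (A' × A × B') (A' × A × B') ℂ positive semidefinite, and J : Matrix (A × B) (A × B) ℂ positive semidefinite. Define ω : Matrix (A' × B × B') (A' × B × B') ℂ by ω (a',b,b') (â',b̂,b̂') = ∑_{a,â} ρ (a',a,b') (â',â,b̂') * J (a,b) (â,b̂). Define the real numbers Wρ := sInf {t : ℝ | ∃ C D, C.PosSemidef ∧ D.PosSemidef ∧ ρ ≤ T_{B'}(C − D) ∧ t = Re(trace(C + D))}, Γ := sInf {μ : ℝ | ∃ V Y, V.PosSemidef ∧ Y.PosSemidef ∧ J ≤ T_B(V − Y) ∧ Tr_B(V + Y) ≤ μ • (1 : Matrix A A ℂ)}, and Wω := sInf {t : ℝ | ∃ E F, E.PosSemidef ∧ F.PosSemidef ∧ ω ≤ T_{BB'}(E − F) ∧ t = Re(trace(E + F))}. Then Wω ≤ Γ * Wρ. (This is the inequality W(A';BB')_ω ≤ Γ(N) · W(A'A;B')_ρ, equivalent to Proposition 1 after taking logarithms.) -/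

import Mathlib

open Matrix ComplexOrder Kronecker

noncomputable section

/-- Partial transpose over the last (`γ`) factor of a matrix on `α × β × γ`:
`T_γ(X) (a,b,c) (a',b',c') = X (a,b,c') (a',b',c)`. -/
def ptLast {α β γ : Type*} (X : Matrix (α × β × γ) (α × β × γ) ℂ) :
    Matrix (α × β × γ) (α × β × γ) ℂ :=
  Matrix.of fun x y => X (x.1, x.2.1, y.2.2) (y.1, y.2.1, x.2.2)

/-- Partial transpose over `β` of a matrix on `α × β`:
`T_β(X) (a,b) (a',b') = X (a,b') (a',b)`. -/
def ptSnd {α β : Type*} (X : Matrix (α × β) (α × β) ℂ) : Matrix (α × β) (α × β) ℂ :=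
  Matrix.of fun x y => X (x.1, y.2) (y.1, x.2)

/-- Joint partial transpose over `β` and `γ` of a matrix on `α × β × γ`:
`T_{βγ}(X) (a,b,c) (a',b',c') = X (a,b',c') (a',b,c)`. -/
def ptBoth {α β γ : Type*} (X : Matrix (α × β × γ) (α × β × γ) ℂ) :
    Matrix (α × β × γ) (α × β × γ) ℂ :=
  Matrix.of fun x y => X (x.1, y.2.1, y.2.2) (y.1, x.2.1, x.2.2)

/-- Partial trace over the second factor: `(Tr_β X) a a' = ∑ b, X (a,b) (a',b)`. -/
def ptrSnd {α β : Type*} [Fintype β] (X : Matrix (α × β) (α × β) ℂ) : Matrix α α ℂ :=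
  Matrix.of fun a a' => ∑ b, X (a, b) (a', b)

/-- Membership in the separable cone `SEP(α:β)`. -/
def InSepCone {α β : Type*} [Fintype α] [Fintype β] (X : Matrix (α × β) (α × β) ℂ) : Prop :=
  ∃ (n : ℕ) (P : Fin n → Matrix α α ℂ) (Q : Fin n → Matrix β β ℂ),
    (∀ i, (P i).PosSemidef) ∧ (∀ i, (Q i).PosSemidef) ∧
    ∀ x y : α × β, X x y = ∑ i, P i x.1 y.1 * Q i x.2 y.2

/-! Write `X ∘ Z` for the link product over `A`, so that `ω = ρ ∘ J`. It preserves positivity,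
being a sum of blocks of a Hadamard product, and it is compatible with the partial transposes:
`T_{BB'}(X ∘ Z) = T_{B'}(X) ∘ T_B(Z)`. If `(C, D)` is feasible for `ρ` and `(V, Y)` for `J`, then
`T_{B'}(C - D) ∘ T_B(V - Y) ≥ ρ ∘ J`, and splitting `(C - D) ∘ (V - Y)` as the difference of
`C ∘ V + D ∘ Y` and `C ∘ Y + D ∘ V` gives a feasible pair for `ω`. The sum of this pair is
`(C + D) ∘ (V + Y)`, whose trace is at most `μ · Tr (C + D)` whenever `Tr_B (V + Y) ≤ μ · 1`. -/

lemma le_sInf_mul_sInf {w : ℝ} {M T : Set ℝ} (hM : M.Nonempty) (hT : T.Nonempty)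
    (hM₀ : ∀ μ ∈ M, 0 ≤ μ) (hT₀ : ∀ t ∈ T, 0 ≤ t) (h : ∀ μ ∈ M, ∀ t ∈ T, w ≤ μ * t) :
    w ≤ sInf M * sInf T := by
  have le_mul_sInf {s : ℝ} {U : Set ℝ} (hs : 0 ≤ s) (hU : U.Nonempty)
      (hw : ∀ u ∈ U, w ≤ s * u) : w ≤ s * sInf U := by
    rw [← smul_eq_mul, ← Real.sInf_smul_of_nonneg hs]
    exact le_csInf hU.smul_set (Set.forall_mem_image.2 hw)
  refine le_mul_sInf (Real.sInf_nonneg hM₀) hT fun t ht ↦ ?_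
  rw [mul_comm]
  exact le_mul_sInf (hT₀ t ht) hM fun μ hμ ↦ (h μ hμ t ht).trans_eq (mul_comm μ t)

section PosSemidef

variable {𝕜 m n : Type*} [RCLike 𝕜]

open scoped Matrix.Norms.L2Operator MatrixOrder in
lemma exists_nonneg_posSemidef_smul_one_sub [Finite n] [DecidableEq n] {H : Matrix n n ℂ}
    (hH : H.IsHermitian) : ∃ c : ℝ, 0 ≤ c ∧ (c • (1 : Matrix n n ℂ) - H).PosSemidef := by
  have := Fintype.ofFinite n
  refine ⟨‖H‖, norm_nonneg H, Matrix.le_iff.1 ?_⟩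
  rw [← Algebra.algebraMap_eq_smul_one]
  exact IsSelfAdjoint.le_algebraMap_norm_self hH

lemma posSemidef_sum_blocks [Finite n] [Fintype m] {K : Matrix (n × m) (n × m) 𝕜}
    (hK : K.PosSemidef) :
    (Matrix.of fun x y ↦ ∑ a, ∑ b, K (x, a) (y, b)).PosSemidef := by
  classical
  have := Fintype.ofFinite n
  convert hK.conjTranspose_mul_mul_same ((1 : Matrix n n 𝕜).submatrix Prod.fst id) using 1
  ext x y
  simpa [Matrix.mul_apply, Matrix.one_apply, Fintype.sum_prod_type_right] using Finset.sum_comm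

lemma trace_mul_transpose_nonneg [Fintype n] {P Q : Matrix n n 𝕜} (hP : P.PosSemidef)
    (hQ : Q.PosSemidef) : 0 ≤ (P * Qᵀ).trace := by
  have h := (hP.hadamard hQ).dotProduct_mulVec_nonneg 1
  rw [← Matrix.sum_hadamard_eq]
  simpa [dotProduct, mulVec] using h

end PosSemidef

section PartialTrace

variable {M 𝕜 α β γ : Type*} [AddCommMonoid M] [RCLike 𝕜]

/-- The partial trace over the two outer factors of a matrix on `α × β × γ`, used to express the
trace of a link product as a pairing on the shared factor `β`. -/
def ptrOuter [Fintype α] [Fintype γ] (X : Matrix (α × β × γ) (α × β × γ) M) : Matrix β β M :=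
  Matrix.of fun b b' ↦ ∑ a, ∑ c, X (a, b, c) (a, b', c)

lemma trace_ptrOuter [Fintype α] [Fintype β] [Fintype γ]
    (X : Matrix (α × β × γ) (α × β × γ) M) : (ptrOuter X).trace = X.trace := by
  simp only [ptrOuter, Matrix.trace, Matrix.diag_apply, Matrix.of_apply, Fintype.sum_prod_type]
  exact Finset.sum_comm

lemma posSemidef_ptrOuter [Fintype α] [Fintype γ] {X : Matrix (α × β × γ) (α × β × γ) 𝕜}
    (hX : X.PosSemidef) : (ptrOuter X).PosSemidef := by
  have h : ptrOuter X = ∑ a, ∑ c, X.submatrix (fun b ↦ (a, b, c)) (fun b ↦ (a, b, c)) := by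
    ext b b'
    simp [ptrOuter, Matrix.sum_apply]
  rw [h]
  exact posSemidef_sum _ fun a _ ↦ posSemidef_sum _ fun c _ ↦ hX.submatrix _

lemma posSemidef_ptrSnd [Fintype β] {X : Matrix (α × β) (α × β) ℂ} (hX : X.PosSemidef) :
    (ptrSnd X).PosSemidef := by
  have h : ptrSnd X = ∑ b, X.submatrix (fun a ↦ (a, b)) (fun a ↦ (a, b)) := by
    ext a a'
    simp [ptrSnd, Matrix.sum_apply]
  rw [h]
  exact posSemidef_sum _ fun b _ ↦ hX.submatrix _

end PartialTrace

section LinkProduct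

variable {R 𝕜 α β γ δ : Type*} [CommSemiring R] [RCLike 𝕜]

/-- The link product over the common factor `β`: for a state `X` and the Choi operator `Z` of a
channel from `β` to `δ`, this is the output state of the channel applied to `X`. The transpose in
the usual link product is absorbed by contracting row indices with row indices and column indices
with column indices. It is bundled as a bilinear map. -/
def linkProduct [Fintype β] :
    Matrix (α × β × γ) (α × β × γ) R →ₗ[R] Matrix (β × δ) (β × δ) R →ₗ[R]
      Matrix (α × δ × γ) (α × δ × γ) R :=
  LinearMap.mk₂ R
    (fun X Z ↦ Matrix.of fun x y ↦
      ∑ b, ∑ b', X (x.1, b, x.2.2) (y.1, b', y.2.2) * Z (b, x.2.1) (b', y.2.1))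
    (fun X X' Z ↦ by ext; simp [add_mul, Finset.sum_add_distrib])
    (fun c X Z ↦ by ext; simp [Finset.mul_sum, mul_assoc])
    (fun X Z Z' ↦ by ext; simp [mul_add, Finset.sum_add_distrib])
    (fun c X Z ↦ by ext; simp [Finset.mul_sum, mul_left_comm])

lemma linkProduct_apply [Fintype β] (X : Matrix (α × β × γ) (α × β × γ) R)
    (Z : Matrix (β × δ) (β × δ) R) (x y : α × δ × γ) :
    linkProduct X Z x y =
      ∑ b, ∑ b', X (x.1, b, x.2.2) (y.1, b', y.2.2) * Z (b, x.2.1) (b', y.2.1) := rfl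

lemma posSemidef_linkProduct [Finite α] [Fintype β] [Finite γ] [Finite δ]
    {X : Matrix (α × β × γ) (α × β × γ) 𝕜} {Z : Matrix (β × δ) (β × δ) 𝕜}
    (hX : X.PosSemidef) (hZ : Z.PosSemidef) : (linkProduct X Z).PosSemidef := by
  have hX' := hX.submatrix fun p : (α × δ × γ) × β ↦ (p.1.1, p.2, p.1.2.2)
  have hZ' := hZ.submatrix fun p : (α × δ × γ) × β ↦ (p.2, p.1.2.1)
  convert posSemidef_sum_blocks (hX'.hadamard hZ') using 1
  ext x y
  exact linkProduct_apply X Z x y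

lemma trace_linkProduct [Fintype α] [Fintype β] [Fintype γ] [Fintype δ]
    (X : Matrix (α × β × γ) (α × β × γ) ℂ) (Z : Matrix (β × δ) (β × δ) ℂ) :
    (linkProduct X Z).trace = (ptrOuter X * (ptrSnd Z)ᵀ).trace := by
  rw [← Matrix.sum_hadamard_eq]
  calc (linkProduct X Z).trace
    _ = ∑ x : α × δ × γ, ∑ b, ∑ b', X (x.1, b, x.2.2) (x.1, b', x.2.2) *
          Z (b, x.2.1) (b', x.2.1) := rfl
    _ = ∑ b, ∑ b', ∑ x : α × δ × γ, X (x.1, b, x.2.2) (x.1, b', x.2.2) *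
          Z (b, x.2.1) (b', x.2.1) := by
      rw [Finset.sum_comm]
      exact Finset.sum_congr rfl fun _ _ ↦ Finset.sum_comm
    _ = ∑ b, ∑ b', (ptrOuter X ⊙ ptrSnd Z) b b' := by
      refine Finset.sum_congr rfl fun b _ ↦ Finset.sum_congr rfl fun b' _ ↦ ?_
      simp only [ptrOuter, ptrSnd, Matrix.hadamard_apply, Matrix.of_apply, Fintype.sum_prod_type,
        Finset.sum_mul, Finset.mul_sum]
      exact Finset.sum_comm

lemma re_trace_linkProduct_le [Fintype α] [Fintype β] [Fintype γ] [Fintype δ] [DecidableEq β]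
    {X : Matrix (α × β × γ) (α × β × γ) ℂ} {Z : Matrix (β × δ) (β × δ) ℂ} {μ : ℝ}
    (hX : X.PosSemidef) (hZ : (μ • (1 : Matrix β β ℂ) - ptrSnd Z).PosSemidef) :
    (linkProduct X Z).trace.re ≤ μ * X.trace.re := by
  have h : 0 ≤ μ • X.trace - (linkProduct X Z).trace := by
    simpa [mul_sub, trace_ptrOuter, trace_linkProduct] using
      trace_mul_transpose_nonneg (posSemidef_ptrOuter hX) hZ
  simpa using (Complex.nonneg_iff.1 h).1

lemma linkProduct_ptLast_ptSnd [Fintype β] (X : Matrix (α × β × γ) (α × β × γ) ℂ)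
    (Z : Matrix (β × δ) (β × δ) ℂ) :
    linkProduct (ptLast X) (ptSnd Z) = ptBoth (linkProduct X Z) := rfl

end LinkProduct

section PartialTranspose

variable {α β γ : Type*} [DecidableEq α] [DecidableEq β] [DecidableEq γ]

lemma ptSnd_diagonal (d : α × β → ℂ) : ptSnd (diagonal d) = diagonal d := by
  ext ⟨a, b⟩ ⟨a', b'⟩
  simp only [ptSnd, Matrix.of_apply, diagonal_apply, Prod.mk.injEq]
  grind

lemma ptLast_diagonal (d : α × β × γ → ℂ) : ptLast (diagonal d) = diagonal d := by
  ext ⟨a, b, c⟩ ⟨a', b', c'⟩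
  simp only [ptLast, Matrix.of_apply, diagonal_apply, Prod.mk.injEq]
  grind

end PartialTranspose

section RainsValues

variable {n α β γ δ : Type*}

/-- The objective values of the feasible points of the semidefinite program for the max-Rains
relative entropy of `M`, where `T` is the partial transpose defining the bipartition: its infimum
is `Wρ` for `T = ptLast` and `M = ρ`, and `Wω` for `T = ptBoth` and `M = ω`. -/
def stateRainsValues [Fintype n] (T : Matrix n n ℂ → Matrix n n ℂ) (M : Matrix n n ℂ) : Set ℝ :=
  {t | ∃ C D : Matrix n n ℂ, C.PosSemidef ∧ D.PosSemidef ∧ (T (C - D) - M).PosSemidef ∧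
    t = ((C + D).trace).re}

/-- The objective values of the feasible points of the semidefinite program for the max-Rains
information of the channel with Choi operator `J`: its infimum is `Γ`. -/
def channelRainsValues [Fintype β] [DecidableEq α] (J : Matrix (α × β) (α × β) ℂ) : Set ℝ :=
  {μ | ∃ V Y : Matrix (α × β) (α × β) ℂ, V.PosSemidef ∧ Y.PosSemidef ∧
    (ptSnd (V - Y) - J).PosSemidef ∧ (μ • (1 : Matrix α α ℂ) - ptrSnd (V + Y)).PosSemidef}

lemma nonneg_of_mem_stateRainsValues [Fintype n] {T : Matrix n n ℂ → Matrix n n ℂ}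
    {M : Matrix n n ℂ} {t : ℝ} (ht : t ∈ stateRainsValues T M) : 0 ≤ t := by
  obtain ⟨C, D, hC, hD, -, rfl⟩ := ht
  exact (Complex.nonneg_iff.1 (hC.add hD).trace_nonneg).1

lemma nonneg_of_mem_channelRainsValues [Fintype β] [DecidableEq α] [Nonempty α]
    {J : Matrix (α × β) (α × β) ℂ} {μ : ℝ} (hμ : μ ∈ channelRainsValues J) : 0 ≤ μ := by
  obtain ⟨V, Y, hV, hY, -, hVY⟩ := hμ
  obtain ⟨a⟩ := ‹Nonempty α›
  have h : (μ • (1 : Matrix α α ℂ)).PosSemidef := by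
    simpa using hVY.add (posSemidef_ptrSnd (hV.add hY))
  simpa using h.diag_nonneg (i := a)

lemma stateRainsValues_nonempty [Fintype n] [DecidableEq n] {T : Matrix n n ℂ → Matrix n n ℂ}
    (hT : ∀ d, T (diagonal d) = diagonal d) {M : Matrix n n ℂ} (hM : M.IsHermitian) :
    (stateRainsValues T M).Nonempty := by
  obtain ⟨c, hc, h⟩ := exists_nonneg_posSemidef_smul_one_sub hM
  refine ⟨_, c • 1, 0, PosSemidef.one.smul hc, PosSemidef.zero, ?_, rfl⟩
  rwa [sub_zero, ← diagonal_one, ← diagonal_smul, hT, diagonal_smul, diagonal_one]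

lemma channelRainsValues_nonempty [Finite α] [Fintype β] [DecidableEq α]
    {J : Matrix (α × β) (α × β) ℂ} (hJ : J.IsHermitian) : (channelRainsValues J).Nonempty := by
  classical
  obtain ⟨c, hc, h⟩ := exists_nonneg_posSemidef_smul_one_sub hJ
  have hV : (c • (1 : Matrix (α × β) (α × β) ℂ)).PosSemidef := PosSemidef.one.smul hc
  obtain ⟨μ, -, hμ⟩ := exists_nonneg_posSemidef_smul_one_sub (posSemidef_ptrSnd hV).isHermitian
  refine ⟨μ, c • 1, 0, hV, PosSemidef.zero, ?_, by rwa [add_zero]⟩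
  rwa [sub_zero, ← diagonal_one, ← diagonal_smul, ptSnd_diagonal, diagonal_smul,
    diagonal_one]

lemma posSemidef_linkProduct_sub_linkProduct [Finite α] [Fintype β] [Finite γ] [Finite δ]
    {X ρ : Matrix (α × β × γ) (α × β × γ) ℂ} {Z J : Matrix (β × δ) (β × δ) ℂ}
    (hρ : ρ.PosSemidef) (hJ : J.PosSemidef) (hX : (X - ρ).PosSemidef)
    (hZ : (Z - J).PosSemidef) : (linkProduct X Z - linkProduct ρ J).PosSemidef := by
  have hZ₀ : Z.PosSemidef := by simpa using hZ.add hJ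
  have h : linkProduct X Z - linkProduct ρ J = linkProduct (X - ρ) Z + linkProduct ρ (Z - J) := by
    rw [map_sub, map_sub, LinearMap.sub_apply, sub_add_sub_cancel]
  rw [h]
  exact (posSemidef_linkProduct hX hZ₀).add (posSemidef_linkProduct hρ hZ)

lemma exists_mem_stateRainsValues_linkProduct_le [Fintype α] [Fintype β] [Fintype γ] [Fintype δ]
    [DecidableEq β] {ρ : Matrix (α × β × γ) (α × β × γ) ℂ} {J : Matrix (β × δ) (β × δ) ℂ}
    (hρ : ρ.PosSemidef) (hJ : J.PosSemidef) {μ t : ℝ} (hμ : μ ∈ channelRainsValues J)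
    (ht : t ∈ stateRainsValues ptLast ρ) :
    ∃ s ∈ stateRainsValues ptBoth (linkProduct ρ J), s ≤ μ * t := by
  obtain ⟨V, Y, hV, hY, hVY, hμ⟩ := hμ
  obtain ⟨C, D, hC, hD, hCD, rfl⟩ := ht
  have h_sub : linkProduct C V + linkProduct D Y - (linkProduct C Y + linkProduct D V) =
      linkProduct (C - D) (V - Y) := by
    simp only [map_sub, LinearMap.sub_apply]
    abel
  have h_add : linkProduct C V + linkProduct D Y + (linkProduct C Y + linkProduct D V) =
      linkProduct (C + D) (V + Y) := by
    simp only [map_add, LinearMap.add_apply]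
    abel
  refine ⟨_, ⟨linkProduct C V + linkProduct D Y, linkProduct C Y + linkProduct D V,
    (posSemidef_linkProduct hC hV).add (posSemidef_linkProduct hD hY),
    (posSemidef_linkProduct hC hY).add (posSemidef_linkProduct hD hV), ?_, rfl⟩, ?_⟩
  · rw [h_sub, ← linkProduct_ptLast_ptSnd]
    exact posSemidef_linkProduct_sub_linkProduct hρ hJ hCD hVY
  · rw [h_add]
    exact re_trace_linkProduct_le (hC.add hD) hμ

end RainsValues

/-- `W(A';BB')_ω ≤ Γ(N) ⬝ W(A'A;B')_ρ`: the SDP-value form of Proposition 1. -/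
theorem max_rains_sdp_value_inequality
    {A' A B' B : Type*}
    [Fintype A'] [Fintype A] [Fintype B'] [Fintype B] [DecidableEq A]
    [Nonempty A'] [Nonempty A] [Nonempty B'] [Nonempty B]
    (ρ : Matrix (A' × A × B') (A' × A × B') ℂ) (J : Matrix (A × B) (A × B) ℂ)
    (hρ : ρ.PosSemidef) (hJ : J.PosSemidef)
    (ω : Matrix (A' × B × B') (A' × B × B') ℂ)
    (hω : ∀ x y, ω x y = ∑ a : A, ∑ a2 : A,
      ρ (x.1, a, x.2.2) (y.1, a2, y.2.2) * J (a, x.2.1) (a2, y.2.1)) :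
    sInf {t : ℝ | ∃ E F : Matrix (A' × B × B') (A' × B × B') ℂ,
        E.PosSemidef ∧ F.PosSemidef ∧ (ptBoth (E - F) - ω).PosSemidef ∧
        t = ((E + F).trace).re}
      ≤ (sInf {μ : ℝ | ∃ V Y : Matrix (A × B) (A × B) ℂ,
            V.PosSemidef ∧ Y.PosSemidef ∧ (ptSnd (V - Y) - J).PosSemidef ∧
            (μ • (1 : Matrix A A ℂ) - ptrSnd (V + Y)).PosSemidef})
        * sInf {t : ℝ | ∃ C D : Matrix (A' × A × B') (A' × A × B') ℂ,
            C.PosSemidef ∧ D.PosSemidef ∧ (ptLast (C - D) - ρ).PosSemidef ∧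
            t = ((C + D).trace).re} := by
  classical
  obtain rfl : ω = linkProduct ρ J := by
    ext x y
    exact hω x y
  change sInf (stateRainsValues ptBoth (linkProduct ρ J)) ≤
    sInf (channelRainsValues J) * sInf (stateRainsValues ptLast ρ)
  refine le_sInf_mul_sInf (channelRainsValues_nonempty hJ.isHermitian)
    (stateRainsValues_nonempty ptLast_diagonal hρ.isHermitian)
    (fun _ ↦ nonneg_of_mem_channelRainsValues) (fun _ ↦ nonneg_of_mem_stateRainsValues)
    fun μ hμ t ht ↦ ?_
  obtain ⟨s, hs, hs_le⟩ := exists_mem_stateRainsValues_linkProduct_le hρ hJ hμ ht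
  exact csInf_le_of_le ⟨0, fun _ ↦ nonneg_of_mem_stateRainsValues⟩ hs hs_le
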